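/- Explicit surface tension for hypercubic (body-centered) lattices: for every d ≥ 1 and every s = (s_1, …, s_d) ∈ [−1/2, 1/2]^d, sup_{α ∈ ℝ^d} ( Σ_{i=1}^d s_i α_i − Σ_{i=1}^d log(exp(α_i/2) + exp(−α_i/2)) ) = Σ_{i=1}^d [ ((1+2s_i)/2)·log((1+2s_i)/2) + ((1−2s_i)/2)·log((1−2s_i)/2) ], where by convention 0·log 0 = 0 (as is automatic with Lean's Real.log 0 = 0). -/

import Mathlib

/-!
The objective is a sum of functions of the single coordinates `α i`, so its supremum is the sum of
the one-dimensional suprema. In one dimension, put `p = ((1 + 2 * s) / 2, (1 - 2 * s) / 2)`, a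
probability vector. The function `∑ i, p i * x i - log (∑ i, exp (x i))` of two variables is
invariant under translation along the diagonal, and as a function of `a = x 0 - x 1` it is
`s * a - log (exp (a / 2) + exp (-a / 2))`. The claim is therefore the Gibbs variational principle:
on the simplex, the convex conjugate of log-sum-exp is `p ↦ ∑ i, p i * log (p i)`. Jensen's
inequality gives the upper bound. On the boundary of the simplex the supremum is not attained; it is
approached along `x i = log (p i + ε)` as `ε` decreases to `0`.
-/

open Filter Finset Real Set Topology

section SeparableSupremum

open scoped Pointwise

variable {ι G : Type*} [AddCommGroup G] [Preorder G] [IsOrderedAddMonoid G]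

theorem isLUB_finsetSum {S : ι → Set G} {a : ι → G} (t : Finset ι)
    (h : ∀ i ∈ t, IsLUB (S i) (a i)) : IsLUB (∑ i ∈ t, S i) (∑ i ∈ t, a i) := by
  classical
  induction t using Finset.induction_on with
  | empty => exact isLUB_singleton
  | insert i t hi ih =>
    rw [sum_insert hi, sum_insert hi]
    exact (h i (mem_insert_self i t)).add (ih fun j hj => h j (mem_insert_of_mem hj))

theorem isLUB_range_sum_apply [Fintype ι] {X : ι → Type*} {f : ∀ i, X i → G} {a : ι → G}
    (h : ∀ i, IsLUB (range (f i)) (a i)) :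
    IsLUB (range fun x : ∀ i, X i => ∑ i, f i (x i)) (∑ i, a i) := by
  have hrange : (range fun x : ∀ i, X i => ∑ i, f i (x i)) = ∑ i, range (f i) := by
    rw [← image_fintype_sum_pi, ← range_piMap, ← range_comp]
    rfl
  rw [hrange]
  exact isLUB_finsetSum univ fun i _ => h i

end SeparableSupremum

section LogSumExp

variable {ι : Type*} [Fintype ι]

/-- The log-sum-exp function `x ↦ log (∑ i, exp (x i))`, the free energy of a system with finitely
many states of weights `exp (x i)`. For empty `ι` it has the junk value `log 0 = 0`. -/
noncomputable def logSumExp (x : ι → ℝ) : ℝ :=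
  log (∑ i, exp (x i))

theorem logSumExp_add_const [Nonempty ι] (x : ι → ℝ) (c : ℝ) :
    logSumExp (fun i => x i + c) = logSumExp x + c := by
  have hpos : 0 < ∑ i, exp (x i) := sum_pos (fun i _ => exp_pos _) univ_nonempty
  simp only [logSumExp, exp_add, ← sum_mul]
  rw [log_mul hpos.ne' (exp_ne_zero c), log_exp]

theorem mul_exp_sub_log_le {p : ℝ} (hp : 0 ≤ p) (x : ℝ) : p * exp (x - log p) ≤ exp x := by
  rcases hp.eq_or_lt with rfl | hp
  · simpa only [zero_mul] using exp_nonneg x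
  · rw [exp_sub, exp_log hp, mul_div_cancel₀ _ hp.ne']

theorem mul_log_le_mul_log_add {p ε : ℝ} (hp : 0 ≤ p) (hε : 0 ≤ ε) :
    p * log p ≤ p * log (p + ε) := by
  rcases hp.eq_or_lt with rfl | hp
  · simp only [zero_mul, le_refl]
  · gcongr
    exact le_add_of_nonneg_right hε

theorem tendsto_log_one_add_mul_nhds_zero (c : ℝ) :
    Tendsto (fun ε : ℝ => log (1 + c * ε)) (𝓝 0) (𝓝 0) := by
  have hcont : ContinuousAt (fun ε : ℝ => log (1 + c * ε)) 0 :=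
    ContinuousAt.log (by fun_prop) (by simp)
  simpa [ContinuousAt] using hcont

variable {p : ι → ℝ}

theorem sum_mul_sub_logSumExp_le (hp : p ∈ stdSimplex ℝ ι) (x : ι → ℝ) :
    ∑ i, p i * x i - logSumExp x ≤ ∑ i, p i * log (p i) := by
  have hexp : exp (∑ i, p i * (x i - log (p i))) ≤ ∑ i, exp (x i) :=
    calc
      exp (∑ i, p i * (x i - log (p i))) ≤ ∑ i, p i * exp (x i - log (p i)) :=
        convexOn_exp.map_sum_le (fun i _ => hp.1 i) hp.2 fun i _ => Set.mem_univ _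
      _ ≤ ∑ i, exp (x i) := sum_le_sum fun i _ => mul_exp_sub_log_le (hp.1 i) (x i)
  have hlog : ∑ i, p i * (x i - log (p i)) ≤ logSumExp x :=
    (le_log_iff_exp_le ((exp_pos _).trans_le hexp)).2 hexp
  simp only [mul_sub, sum_sub_distrib] at hlog
  linarith

theorem logSumExp_log_add (hp : p ∈ stdSimplex ℝ ι) {ε : ℝ} (hε : 0 < ε) :
    logSumExp (fun i => log (p i + ε)) = log (1 + Fintype.card ι * ε) := by
  have hexp (i : ι) : exp (log (p i + ε)) = p i + ε :=
    exp_log (add_pos_of_nonneg_of_pos (hp.1 i) hε)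
  simp only [logSumExp, hexp, sum_add_distrib, hp.2, sum_const, card_univ, nsmul_eq_mul]

theorem isLUB_range_sum_mul_sub_logSumExp (hp : p ∈ stdSimplex ℝ ι) :
    IsLUB (range fun x : ι → ℝ => ∑ i, p i * x i - logSumExp x) (∑ i, p i * log (p i)) := by
  refine ⟨forall_mem_range.2 (sum_mul_sub_logSumExp_le hp), fun b hb => ?_⟩
  have hlower : ∀ ε > 0, ∑ i, p i * log (p i) - log (1 + Fintype.card ι * ε) ≤ b := fun ε hε =>
    calc
      ∑ i, p i * log (p i) - log (1 + Fintype.card ι * ε)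
          ≤ ∑ i, p i * log (p i + ε) - logSumExp (fun i => log (p i + ε)) := by
        rw [logSumExp_log_add hp hε]
        gcongr ?_ - _
        exact sum_le_sum fun i _ => mul_log_le_mul_log_add (hp.1 i) hε.le
      _ ≤ b := hb (mem_range_self fun i => log (p i + ε))
  have hlim : Tendsto (fun ε : ℝ => ∑ i, p i * log (p i) - log (1 + Fintype.card ι * ε))
      (𝓝[>] 0) (𝓝 (∑ i, p i * log (p i))) := by
    simpa only [sub_zero] using
      ((tendsto_log_one_add_mul_nhds_zero _).mono_left nhdsWithin_le_nhds).const_sub _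
  exact le_of_tendsto hlim (eventually_mem_nhdsWithin.mono hlower)

end LogSumExp

section TwoStates

theorem logSumExp_fin_two (x : Fin 2 → ℝ) :
    logSumExp x = log (exp ((x 0 - x 1) / 2) + exp (-(x 0 - x 1) / 2)) + (x 0 + x 1) / 2 := by
  have hx : x = fun i => ![(x 0 - x 1) / 2, -(x 0 - x 1) / 2] i + (x 0 + x 1) / 2 := by
    refine funext (Fin.forall_fin_two.2 ⟨?_, ?_⟩)
    · simp only [Matrix.cons_val_zero]
      ring
    · simp only [Matrix.cons_val_one, Matrix.cons_val_fin_one]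
      ring
  conv_lhs => rw [hx, logSumExp_add_const]
  simp only [logSumExp, Fin.sum_univ_two, Matrix.cons_val_zero, Matrix.cons_val_one,
    Matrix.cons_val_fin_one]

theorem vecCons_mem_stdSimplex_iff {p q : ℝ} :
    ![p, q] ∈ stdSimplex ℝ (Fin 2) ↔ 0 ≤ p ∧ 0 ≤ q ∧ p + q = 1 := by
  simp [stdSimplex, and_assoc]

theorem isLUB_range_mul_sub_log_exp_add_exp_neg {s : ℝ} (hs : s ∈ Icc (-(1 / 2) : ℝ) (1 / 2)) :
    IsLUB (range fun a : ℝ => s * a - log (exp (a / 2) + exp (-a / 2)))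
      ((1 + 2 * s) / 2 * log ((1 + 2 * s) / 2) + (1 - 2 * s) / 2 * log ((1 - 2 * s) / 2)) := by
  have hp : ![(1 + 2 * s) / 2, (1 - 2 * s) / 2] ∈ stdSimplex ℝ (Fin 2) :=
    vecCons_mem_stdSimplex_iff.2 ⟨by linarith [hs.1], by linarith [hs.2], by ring⟩
  have hgibbs := isLUB_range_sum_mul_sub_logSumExp hp
  simp only [Fin.sum_univ_two, Matrix.cons_val_zero, Matrix.cons_val_one,
    Matrix.cons_val_fin_one] at hgibbs
  have hsurj : Function.Surjective fun x : Fin 2 → ℝ => x 0 - x 1 := fun a =>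
    ⟨![a, 0], sub_zero a⟩
  rw [← hsurj.range_comp]
  convert hgibbs using 3 with x
  rw [Function.comp_apply, logSumExp_fin_two]
  ring

end TwoStates

/-- Explicit surface tension for hypercubic (body-centered) lattices: for every `d ≥ 1`
and `s ∈ [−1/2, 1/2]^d`,
`sup_α (Σ_i s_i α_i − Σ_i log(e^{α_i/2} + e^{−α_i/2}))
  = Σ_i [((1+2s_i)/2) log((1+2s_i)/2) + ((1−2s_i)/2) log((1−2s_i)/2)]`,
with the convention `0 · log 0 = 0` (automatic since `Real.log 0 = 0`). -/
theorem surfTension_hypercubic_explicit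
    (d : ℕ) (hd : 1 ≤ d)
    (s : Fin d → ℝ) (hs : ∀ i, s i ∈ Set.Icc (-(1 / 2) : ℝ) (1 / 2)) :
    sSup (Set.range fun α : Fin d → ℝ =>
        (∑ i, s i * α i) -
          ∑ i, Real.log (Real.exp (α i / 2) + Real.exp (-(α i) / 2)))
      = ∑ i, (((1 + 2 * s i) / 2) * Real.log ((1 + 2 * s i) / 2) +
              ((1 - 2 * s i) / 2) * Real.log ((1 - 2 * s i) / 2)) := by
  have hsep := isLUB_range_sum_apply fun i => isLUB_range_mul_sub_log_exp_add_exp_neg (hs i)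
  simp only [← sum_sub_distrib]
  exact hsep.csSup_eq (range_nonempty _)
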